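/- arXiv:2401.02181 — 2 statements merged into one kernel-verified Lean document; each statement's English description precedes it below -/
import Mathlib

section
/- Let D ⊆ ℝ² be a bounded convex open set, let Γ be a nondegenerate closed line segment contained in the boundary of D, and let ψ : ℝ² → ℝ be a continuous function with ψ ≥ 0 on Γ and ∫_Γ ψ dH¹ > 0, where H¹ is the one-dimensional Hausdorff measure. Then there exists a constant C > 0 such that for every continuously differentiable function w : ℝ² → ℝ, ∫_D |w − e_Γ(w)| dx ≤ C·∫_D |∇w| dx, where e_Γ(w) = (∫_Γ w·ψ dH¹)/(∫_Γ ψ dH¹). -/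
open MeasureTheory

open Set Module
open scoped ENNReal NNReal

section Auxiliary

variable {E : Type*} [NormedAddCommGroup E] [NormedSpace ℝ E]

/-- The increment of a `C¹` function along a segment is controlled by the integral of its
derivative. -/
theorem enorm_sub_le_lintegral_fderiv {w : E → ℝ} (hw : ContDiff ℝ 1 w) (x v : E) {t : ℝ}
    (ht : 0 ≤ t) :
    ‖w (x + t • v) - w x‖ₑ ≤ ∫⁻ τ in Ioc 0 t, ‖fderiv ℝ w (x + τ • v)‖ₑ * ‖v‖ₑ := by
  have hcont : Continuous fun τ : ℝ => fderiv ℝ w (x + τ • v) v :=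
    ((hw.continuous_fderiv one_ne_zero).comp (by fun_prop)).clm_apply continuous_const
  have hderiv : ∀ τ ∈ uIcc 0 t,
      HasDerivAt (fun τ : ℝ => w (x + τ • v)) (fderiv ℝ w (x + τ • v) v) τ := by
    intro τ _
    have h1 : HasDerivAt (fun τ : ℝ => x + τ • v) v τ := by
      simpa using ((hasDerivAt_id τ).smul_const v).const_add x
    exact ((hw.differentiable one_ne_zero) _).hasFDerivAt.comp_hasDerivAt τ h1
  have hftc := intervalIntegral.integral_eq_sub_of_hasDerivAt hderiv
    (hcont.intervalIntegrable 0 t)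
  rw [zero_smul, add_zero, intervalIntegral.integral_of_le ht] at hftc
  rw [← hftc]
  refine (enorm_integral_le_lintegral_enorm _).trans (lintegral_mono fun τ => ?_)
  exact ContinuousLinearMap.le_opENorm _ _

theorem measurable_enorm_fderiv [MeasurableSpace E] [BorelSpace E] {w : E → ℝ} (hw : ContDiff ℝ 1 w) :
    Measurable fun x => ‖fderiv ℝ w x‖ₑ :=
  (hw.continuous_fderiv one_ne_zero).enorm.measurable

/-- A line through two points of the closure of a convex open set that spans a segment of its
frontier does not meet the set. -/
theorem lineMap_notMem_of_segment_subset_frontier {D : Set E} (hDo : IsOpen D)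
    (hDc : Convex ℝ D) {p q : E} (h : segment ℝ p q ⊆ frontier D) (r : ℝ) :
    p + r • (q - p) ∉ D := by
  intro hx
  have hfr : ∀ z ∈ segment ℝ p q, z ∈ closure D ∧ z ∉ D := fun z hz => by
    have := h hz
    rwa [hDo.frontier_eq] at this
  have hp := hfr p (left_mem_segment ℝ p q)
  have hq := hfr q (right_mem_segment ℝ p q)
  have hxi : p + r • (q - p) ∈ interior D := by rwa [hDo.interior_eq]
  rcases lt_or_ge r 0 with h0 | h0
  · apply hp.2
    have hr : (0 : ℝ) < 1 - r := by linarith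
    have := hDc.combo_interior_closure_mem_interior hxi hq.1 (a := 1 / (1 - r))
      (b := -r / (1 - r)) (by positivity) (div_nonneg (by linarith) hr.le) (by field_simp; ring)
    rw [hDo.interior_eq] at this
    convert this using 1
    match_scalars <;> field_simp <;> ring
  rcases le_or_gt r 1 with h1 | h1
  · refine (hfr _ ?_).2 hx
    rw [segment_eq_image']
    exact ⟨r, ⟨h0, h1⟩, rfl⟩
  · apply hq.2
    have hr : (0 : ℝ) < r := by linarith
    have := hDc.combo_interior_closure_mem_interior hxi hp.1 (a := 1 / r)
      (b := (r - 1) / r) (by positivity) (div_nonneg (by linarith) hr.le) (by field_simp; ring)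
    rw [hDo.interior_eq] at this
    convert this using 1
    match_scalars <;> field_simp
    ring

variable [FiniteDimensional ℝ E] [MeasurableSpace E] [BorelSpace E]
  (μ : Measure E) [μ.IsAddHaarMeasure]

theorem lintegral_comp_add_smul {f : E → ℝ≥0∞} (hf : Measurable f) (a : E) {r : ℝ} (hr : r ≠ 0) :
    ∫⁻ x, f (a + r • x) ∂μ = ENNReal.ofReal |(r ^ finrank ℝ E)⁻¹| * ∫⁻ x, f x ∂μ := by
  have h := lintegral_map (μ := μ) (f := fun x => f (a + x)) (g := fun x : E => r • x)
    (by fun_prop) (by fun_prop)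
  rw [← h, Measure.map_addHaar_smul μ hr, lintegral_smul_measure, lintegral_add_left_eq_self f a,
    smul_eq_mul]

/-- Contracting a convex set towards one of its points by a factor at least `1/2`. -/
theorem setLIntegral_contraction_le {D : Set E} (hD : MeasurableSet D) (hDc : Convex ℝ D)
    {f : E → ℝ≥0∞} (hf : Measurable f) {x : E} (hx : x ∈ D) {τ : ℝ} (h0 : 0 ≤ τ)
    (h2 : τ ≤ 1 / 2) :
    ∫⁻ y in D, f (y + τ • (x - y)) ∂μ ≤ 2 ^ finrank ℝ E * ∫⁻ y in D, f y ∂μ := by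
  have hr : (0 : ℝ) < 1 - τ := by linarith
  calc ∫⁻ y in D, f (y + τ • (x - y)) ∂μ
      ≤ ∫⁻ y in D, D.indicator f (τ • x + (1 - τ) • y) ∂μ := by
        refine setLIntegral_mono' hD fun y hy => ?_
        have hmem : τ • x + (1 - τ) • y ∈ D := hDc hx hy h0 hr.le (by ring)
        rw [indicator_of_mem hmem]
        apply le_of_eq
        congr 1
        module
    _ ≤ ∫⁻ y, D.indicator f (τ • x + (1 - τ) • y) ∂μ := setLIntegral_le_lintegral _ _
    _ = ENNReal.ofReal |((1 - τ) ^ finrank ℝ E)⁻¹| * ∫⁻ y in D, f y ∂μ := by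
        rw [lintegral_comp_add_smul μ (hf.indicator hD) _ hr.ne', lintegral_indicator hD]
    _ ≤ 2 ^ finrank ℝ E * ∫⁻ y in D, f y ∂μ := by
        gcongr
        rw [abs_of_pos (by positivity), ← inv_pow, ENNReal.ofReal_pow (by positivity)]
        gcongr
        rw [← ENNReal.ofReal_ofNat 2]
        apply ENNReal.ofReal_le_ofReal
        rw [inv_le_comm₀ hr two_pos]
        linarith

/-- The double-integral form of the `L¹` Poincaré inequality on a bounded convex set. -/
theorem lintegral_lintegral_enorm_sub_le {D : Set E} (hD : MeasurableSet D)
    (hDc : Convex ℝ D) (hDb : Bornology.IsBounded D) :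
    ∃ K : ℝ≥0∞, K ≠ ∞ ∧ ∀ w : E → ℝ, ContDiff ℝ 1 w →
      ∫⁻ x in D, ∫⁻ y in D, ‖w y - w x‖ₑ ∂μ ∂μ ≤ K * ∫⁻ x in D, ‖fderiv ℝ w x‖ₑ ∂μ := by
  have hμD : μ D ≠ ∞ := hDb.measure_lt_top.ne
  refine ⟨2 * (Metric.ediam D * 2 ^ finrank ℝ E * μ D), ?_, fun w hw => ?_⟩
  · exact ENNReal.mul_ne_top (by simp) (ENNReal.mul_ne_top
      (ENNReal.mul_ne_top hDb.ediam_ne_top (by simp)) hμD)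
  set G := ∫⁻ x in D, ‖fderiv ℝ w x‖ₑ ∂μ
  have hwc := hw.continuous
  have hFm := measurable_enorm_fderiv hw
  let m : E → E → E := fun x y => y + (1 / 2 : ℝ) • (x - y)
  have hhalf : ∀ x ∈ D, ∫⁻ y in D, ‖w (m x y) - w y‖ₑ ∂μ
      ≤ Metric.ediam D * 2 ^ finrank ℝ E * G := by
    intro x hx
    calc ∫⁻ y in D, ‖w (m x y) - w y‖ₑ ∂μ
        ≤ ∫⁻ y in D, (∫⁻ τ in Ioc (0 : ℝ) (1 / 2),
            ‖fderiv ℝ w (y + τ • (x - y))‖ₑ * Metric.ediam D) ∂μ := by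
          refine setLIntegral_mono' hD fun y hy => ?_
          refine (enorm_sub_le_lintegral_fderiv hw y (x - y) (by norm_num)).trans
            (lintegral_mono fun τ => ?_)
          dsimp only
          gcongr
          rw [← edist_eq_enorm_sub]
          exact Metric.edist_le_ediam_of_mem hx hy
      _ = ∫⁻ τ in Ioc (0 : ℝ) (1 / 2), ∫⁻ y in D,
            ‖fderiv ℝ w (y + τ • (x - y))‖ₑ * Metric.ediam D ∂μ := by
          refine lintegral_lintegral_swap (Measurable.aemeasurable ?_)
          exact (hFm.comp (by fun_prop)).mul_const _
      _ ≤ ∫⁻ τ in Ioc (0 : ℝ) (1 / 2), 2 ^ finrank ℝ E * G * Metric.ediam D := by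
          refine setLIntegral_mono' measurableSet_Ioc fun τ hτ => ?_
          have hm : Measurable fun y => ‖fderiv ℝ w (y + τ • (x - y))‖ₑ := hFm.comp (by fun_prop)
          rw [lintegral_mul_const _ hm]
          gcongr
          exact setLIntegral_contraction_le μ hD hDc hFm hx hτ.1.le hτ.2
      _ ≤ 2 ^ finrank ℝ E * G * Metric.ediam D * 1 := by
          rw [setLIntegral_const]
          gcongr
          rw [Real.volume_Ioc]
          exact ENNReal.ofReal_le_one.2 (by norm_num)
      _ = Metric.ediam D * 2 ^ finrank ℝ E * G := by ring
  have hmeas : Measurable fun z : E × E => ‖w (m z.1 z.2) - w z.2‖ₑ := by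
    have : Continuous fun z : E × E => m z.1 z.2 := by fun_prop
    exact (by fun_prop : Continuous fun z : E × E => ‖w (m z.1 z.2) - w z.2‖ₑ).measurable
  have hmeas' : Measurable fun z : E × E => ‖w (m z.2 z.1) - w z.1‖ₑ := hmeas.comp measurable_swap
  have hint : ∫⁻ x in D, ∫⁻ y in D, ‖w (m x y) - w y‖ₑ ∂μ ∂μ
      ≤ Metric.ediam D * 2 ^ finrank ℝ E * G * μ D :=
    (setLIntegral_mono' hD hhalf).trans_eq (setLIntegral_const _ _)
  calc ∫⁻ x in D, ∫⁻ y in D, ‖w y - w x‖ₑ ∂μ ∂μ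
      ≤ ∫⁻ x in D, ∫⁻ y in D, (‖w (m x y) - w y‖ₑ + ‖w (m y x) - w x‖ₑ) ∂μ ∂μ := by
        refine lintegral_mono fun x => lintegral_mono fun y => ?_
        have hm : m y x = m x y := by simp only [m]; module
        dsimp only
        rw [hm, ← edist_eq_enorm_sub, ← edist_eq_enorm_sub, ← edist_eq_enorm_sub,
          edist_comm _ (w y)]
        exact edist_triangle _ _ _
    _ = ∫⁻ x in D, ∫⁻ y in D, ‖w (m x y) - w y‖ₑ ∂μ ∂μ
          + ∫⁻ x in D, ∫⁻ y in D, ‖w (m y x) - w x‖ₑ ∂μ ∂μ := by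
        rw [← lintegral_add_left hmeas.lintegral_prod_right']
        refine lintegral_congr fun x => ?_
        exact lintegral_add_left (hmeas.comp measurable_prodMk_left) _
    _ = 2 * ∫⁻ x in D, ∫⁻ y in D, ‖w (m x y) - w y‖ₑ ∂μ ∂μ := by
        rw [lintegral_lintegral_swap (f := fun x y => ‖w (m y x) - w x‖ₑ) hmeas'.aemeasurable,
          two_mul]
    _ ≤ 2 * (Metric.ediam D * 2 ^ finrank ℝ E * μ D) * G := by
        rw [mul_assoc 2]
        gcongr
        exact hint.trans_eq (by ring)

/-- The linear change of variables from the plane `ℝ × ℝ` given by a basis. -/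
theorem exists_lintegral_lintegral_add_smul_eq (hE : finrank ℝ E = 2) {u v : E}
    (huv : LinearIndependent ℝ ![u, v]) :
    ∃ K : ℝ≥0, ∀ f : E → ℝ≥0∞, Measurable f → ∀ a : E,
      ∫⁻ s : ℝ, ∫⁻ t : ℝ, f (a + s • u + t • v) = K * ∫⁻ x, f x ∂μ := by
  let l : ℝ × ℝ →ₗ[ℝ] E :=
    (LinearMap.fst ℝ ℝ ℝ).smulRight u + (LinearMap.snd ℝ ℝ ℝ).smulRight v
  have hl : ∀ z, l z = z.1 • u + z.2 • v := fun z => rfl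
  have hinj : Function.Injective l := by
    rw [← LinearMap.ker_eq_bot, LinearMap.ker_eq_bot']
    rintro ⟨s, t⟩ h
    obtain ⟨rfl, rfl⟩ := LinearIndependent.pair_iff.1 huv s t h
    rfl
  let L : (ℝ × ℝ) ≃L[ℝ] E :=
    (LinearEquiv.ofInjectiveOfFinrankEq l hinj (by simp [hE])).toContinuousLinearEquiv
  have hL : ∀ z, L z = z.1 • u + z.2 • v := hl
  obtain ⟨K, hK⟩ : ∃ K : ℝ≥0, Measure.map L volume = K • μ :=
    ⟨_, Measure.isAddLeftInvariant_eq_smul (Measure.map L volume) μ⟩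
  refine ⟨K, fun f hf a => ?_⟩
  calc ∫⁻ s : ℝ, ∫⁻ t : ℝ, f (a + s • u + t • v)
      = ∫⁻ z : ℝ × ℝ, f (a + L z) := by
        rw [Measure.volume_eq_prod, lintegral_prod]
        · simp only [hL, add_assoc]
        · exact (hf.comp (L.continuous.measurable.const_add a)).aemeasurable
    _ = ∫⁻ x, f (a + x) ∂(Measure.map L volume) :=
        (lintegral_map (hf.comp (measurable_const_add a)) L.continuous.measurable).symm
    _ = K * ∫⁻ x, f x ∂μ := by
        rw [hK, lintegral_smul_measure, lintegral_add_left_eq_self f a]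
        rfl

/-- A trace inequality: if the parallelograms with sides `u` and `v` over a piece of a line lie in
`D`, then the `L¹` norm on that piece is controlled by the `W^{1,1}` norm on `D`. -/
theorem exists_lintegral_enorm_sub_le (hE : finrank ℝ E = 2) {u v : E}
    (huv : LinearIndependent ℝ ![u, v]) {D : Set E} (hD : MeasurableSet D) {S : Set ℝ}
    (hS : MeasurableSet S) {a : E} (hSD : ∀ s ∈ S, ∀ t ∈ Ioo (0 : ℝ) 1, a + s • u + t • v ∈ D) :
    ∃ K : ℝ≥0∞, K ≠ ∞ ∧ ∀ w : E → ℝ, ContDiff ℝ 1 w → ∀ c : ℝ,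
      ∫⁻ s in S, ‖w (a + s • u) - c‖ₑ
        ≤ K * (∫⁻ x in D, ‖fderiv ℝ w x‖ₑ ∂μ + ∫⁻ x in D, ‖w x - c‖ₑ ∂μ) := by
  obtain ⟨K, hK⟩ := exists_lintegral_lintegral_add_smul_eq μ hE huv
  have hpar : ∀ f : E → ℝ≥0∞, Measurable f →
      ∫⁻ s in S, ∫⁻ t in Ioo (0 : ℝ) 1, f (a + s • u + t • v) ≤ K * ∫⁻ x in D, f x ∂μ := by
    intro f hf
    calc ∫⁻ s in S, ∫⁻ t in Ioo (0 : ℝ) 1, f (a + s • u + t • v)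
        ≤ ∫⁻ s in S, ∫⁻ t in Ioo (0 : ℝ) 1, D.indicator f (a + s • u + t • v) := by
          refine setLIntegral_mono' hS fun s hs => setLIntegral_mono' measurableSet_Ioo
            fun t ht => ?_
          rw [indicator_of_mem (hSD s hs t ht)]
      _ ≤ ∫⁻ s, ∫⁻ t, D.indicator f (a + s • u + t • v) :=
          (setLIntegral_le_lintegral _ _).trans
            (lintegral_mono fun s => setLIntegral_le_lintegral _ _)
      _ = K * ∫⁻ x in D, f x ∂μ := by rw [hK _ (hf.indicator hD), lintegral_indicator hD]
  refine ⟨(1 + ‖v‖ₑ) * K, ENNReal.mul_ne_top (by simp) (by simp), fun w hw c => ?_⟩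
  have hwc := hw.continuous
  have hFm := measurable_enorm_fderiv hw
  have hwm : Measurable fun x => ‖w x - c‖ₑ :=
    (by fun_prop : Continuous fun x => ‖w x - c‖ₑ).measurable
  have hpt : ∀ s : ℝ, ‖w (a + s • u) - c‖ₑ
      ≤ ‖v‖ₑ * (∫⁻ t in Ioo (0 : ℝ) 1, ‖fderiv ℝ w (a + s • u + t • v)‖ₑ)
        + ∫⁻ t in Ioo (0 : ℝ) 1, ‖w (a + s • u + t • v) - c‖ₑ := by
    intro s
    set x := a + s • u
    set A := ‖v‖ₑ * ∫⁻ t in Ioo (0 : ℝ) 1, ‖fderiv ℝ w (x + t • v)‖ₑ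
    calc ‖w x - c‖ₑ = ∫⁻ _ in Ioo (0 : ℝ) 1, ‖w x - c‖ₑ := by simp
      _ ≤ ∫⁻ t in Ioo (0 : ℝ) 1, (A + ‖w (x + t • v) - c‖ₑ) := by
          refine setLIntegral_mono' measurableSet_Ioo fun t ht => ?_
          have hA : ‖w (x + t • v) - w x‖ₑ ≤ A := by
            refine (enorm_sub_le_lintegral_fderiv hw x v ht.1.le).trans ?_
            have hm : Measurable fun τ : ℝ => ‖fderiv ℝ w (x + τ • v)‖ₑ := hFm.comp (by fun_prop)
            rw [lintegral_mul_const _ hm, mul_comm]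
            have hsub : Ioc 0 t ⊆ Ioo (0 : ℝ) 1 := fun τ hτ => ⟨hτ.1, hτ.2.trans_lt ht.2⟩
            exact mul_le_mul_right (lintegral_mono_set hsub) _
          refine le_trans ?_ (add_le_add_left hA _)
          simp only [← edist_eq_enorm_sub]
          rw [edist_comm _ (w x)]
          exact edist_triangle _ _ _
      _ = A + ∫⁻ t in Ioo (0 : ℝ) 1, ‖w (x + t • v) - c‖ₑ := by
          rw [lintegral_add_left measurable_const]
          simp
  have hjoint : Measurable fun z : ℝ × ℝ => ‖fderiv ℝ w (a + z.1 • u + z.2 • v)‖ₑ :=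
    hFm.comp (by fun_prop)
  calc ∫⁻ s in S, ‖w (a + s • u) - c‖ₑ
      ≤ ∫⁻ s in S, (‖v‖ₑ * (∫⁻ t in Ioo (0 : ℝ) 1, ‖fderiv ℝ w (a + s • u + t • v)‖ₑ)
        + ∫⁻ t in Ioo (0 : ℝ) 1, ‖w (a + s • u + t • v) - c‖ₑ) := lintegral_mono hpt
    _ = ‖v‖ₑ * (∫⁻ s in S, ∫⁻ t in Ioo (0 : ℝ) 1, ‖fderiv ℝ w (a + s • u + t • v)‖ₑ)
        + ∫⁻ s in S, ∫⁻ t in Ioo (0 : ℝ) 1, ‖w (a + s • u + t • v) - c‖ₑ := by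
        rw [lintegral_add_left (hjoint.lintegral_prod_right'.const_mul _),
          lintegral_const_mul _ hjoint.lintegral_prod_right']
    _ ≤ ‖v‖ₑ * (K * ∫⁻ x in D, ‖fderiv ℝ w x‖ₑ ∂μ) + K * ∫⁻ x in D, ‖w x - c‖ₑ ∂μ := by
        gcongr
        · exact hpar _ hFm
        · exact hpar _ hwm
    _ ≤ (1 + ‖v‖ₑ) * (K * ∫⁻ x in D, ‖fderiv ℝ w x‖ₑ ∂μ)
        + (1 + ‖v‖ₑ) * (K * ∫⁻ x in D, ‖w x - c‖ₑ ∂μ) := by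
        exact add_le_add (mul_le_mul_left le_add_self _) (le_mul_of_one_le_left' le_self_add)
    _ = _ := by ring

end Auxiliary

section Segment

variable {E : Type*} [NormedAddCommGroup E] [NormedSpace ℝ E] [MeasurableSpace E] [BorelSpace E]

theorem hausdorffMeasure_restrict_segment (p q : E) :
    (μH[1] : Measure E).restrict (segment ℝ p q) =
      nndist p q • (volume.restrict (Icc (0 : ℝ) 1)).map (fun s : ℝ => p + s • (q - p)) := by
  have hφ : Measurable fun s : ℝ => p + s • (q - p) :=
    (by fun_prop : Continuous fun s : ℝ => p + s • (q - p)).measurable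
  have hline : (fun s : ℝ => p + s • (q - p)) = AffineMap.lineMap p q := by
    ext s
    rw [AffineMap.lineMap_apply_module']
    abel
  ext A hA
  rw [Measure.restrict_apply hA, segment_eq_image', ← image_preimage_inter, hline,
    hausdorffMeasure_lineMap_image, hausdorffMeasure_real, ← hline, Measure.smul_apply,
    Measure.map_apply hφ hA, Measure.restrict_apply (hφ hA)]

theorem setLIntegral_segment_le {p q : E} {f : E → ℝ≥0∞} (hf : Measurable f) :
    ∫⁻ x in segment ℝ p q, f x ∂(μH[1]) ≤ nndist p q *
      ((∫⁻ s in Icc (0 : ℝ) (1 / 2), f (p + s • (q - p)))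
        + ∫⁻ s in Icc (1 / 2 : ℝ) 1, f (p + s • (q - p))) := by
  have hφ : Measurable fun s : ℝ => p + s • (q - p) :=
    (by fun_prop : Continuous fun s : ℝ => p + s • (q - p)).measurable
  rw [hausdorffMeasure_restrict_segment, lintegral_smul_measure, lintegral_map hf hφ,
    ← Icc_union_Icc_eq_Icc (by norm_num : (0 : ℝ) ≤ 1 / 2) (by norm_num : (1 / 2 : ℝ) ≤ 1)]
  exact mul_le_mul_right (lintegral_union_le _ _ _) _

/-- The distance of a constant to a weighted mean over a segment. -/
theorem exists_enorm_sub_weighted_mean_le {p q : E} {ψ : E → ℝ} (hψ : Continuous ψ)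
    (hψ0 : ∫ x in segment ℝ p q, ψ x ∂(μH[1]) ≠ 0) :
    ∃ K : ℝ≥0∞, K ≠ ∞ ∧ ∀ w : E → ℝ, Continuous w → ∀ c : ℝ,
      ‖c - (∫ x in segment ℝ p q, w x * ψ x ∂(μH[1])) / ∫ x in segment ℝ p q, ψ x ∂(μH[1])‖ₑ
        ≤ K * ∫⁻ x in segment ℝ p q, ‖w x - c‖ₑ ∂(μH[1]) := by
  have hcomp : IsCompact (segment ℝ p q) := by
    rw [segment_eq_image']
    exact isCompact_Icc.image (by fun_prop)
  have hmeas : MeasurableSet (segment ℝ p q) := hcomp.isClosed.measurableSet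
  have hint : ∀ g : E → ℝ, Continuous g → IntegrableOn g (segment ℝ p q) μH[1] := by
    intro g hg
    rw [IntegrableOn, hausdorffMeasure_restrict_segment]
    have hφ : Continuous fun s : ℝ => p + s • (q - p) := by fun_prop
    refine Integrable.smul_measure_nnreal ?_
    rw [integrable_map_measure hg.measurable.aestronglyMeasurable hφ.aemeasurable]
    exact (hg.comp hφ).continuousOn.integrableOn_compact isCompact_Icc
  obtain ⟨M, hM⟩ := hcomp.exists_bound_of_continuousOn hψ.continuousOn
  set I := ∫ x in segment ℝ p q, ψ x ∂(μH[1])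
  refine ⟨‖I⁻¹‖ₑ * ENNReal.ofReal M, ENNReal.mul_ne_top (by simp) (by simp), fun w hw c => ?_⟩
  have heq : c - (∫ x in segment ℝ p q, w x * ψ x ∂(μH[1])) / I
      = I⁻¹ * ∫ x in segment ℝ p q, (c - w x) * ψ x ∂(μH[1]) := by
    have : ∫ x in segment ℝ p q, (c - w x) * ψ x ∂(μH[1])
        = c * I - ∫ x in segment ℝ p q, w x * ψ x ∂(μH[1]) := by
      simp_rw [sub_mul]
      rw [integral_sub (hint _ (by fun_prop)) (hint _ (by fun_prop)), integral_const_mul]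
    rw [this]
    field_simp
  rw [heq, enorm_mul, mul_assoc]
  gcongr
  refine (enorm_integral_le_lintegral_enorm _).trans ?_
  rw [← lintegral_const_mul' _ _ ENNReal.ofReal_ne_top]
  refine setLIntegral_mono' hmeas fun x hx => ?_
  rw [enorm_mul, mul_comm, ← enorm_neg (c - w x), neg_sub, ← ofReal_norm (ψ x)]
  gcongr
  exact hM x hx

end Segment

/-- The trace inequality on a boundary segment of a convex open planar set. -/
theorem exists_setLIntegral_segment_enorm_sub_le {E : Type*} [NormedAddCommGroup E]
    [NormedSpace ℝ E] [FiniteDimensional ℝ E] [MeasurableSpace E] [BorelSpace E] (μ : Measure E)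
    [μ.IsAddHaarMeasure] (hE : finrank ℝ E = 2) {D : Set E} (hDo : IsOpen D) (hDc : Convex ℝ D)
    {p q : E} (hpq : p ≠ q) (h : segment ℝ p q ⊆ frontier D) :
    ∃ K : ℝ≥0∞, K ≠ ∞ ∧ ∀ w : E → ℝ, ContDiff ℝ 1 w → ∀ c : ℝ,
      ∫⁻ x in segment ℝ p q, ‖w x - c‖ₑ ∂(μH[1])
        ≤ K * (∫⁻ x in D, ‖fderiv ℝ w x‖ₑ ∂μ + ∫⁻ x in D, ‖w x - c‖ₑ ∂μ) := by
  have hcl : segment ℝ p q ⊆ closure D := h.trans frontier_subset_closure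
  obtain ⟨z, hz⟩ : D.Nonempty := closure_nonempty_iff.1 ⟨p, hcl (left_mem_segment ℝ p q)⟩
  have hline : ∀ r : ℝ, r • (q - p) ≠ z - p := fun r hr => by
    apply lineMap_notMem_of_segment_subset_frontier hDo hDc h r
    rwa [hr, add_sub_cancel]
  have hu : q - p ≠ 0 := sub_ne_zero.2 hpq.symm
  have hindp : LinearIndependent ℝ ![q - p, (1 / 2 : ℝ) • (z - p)] := by
    refine (LinearIndependent.pair_iff' hu).2 fun r hr => hline (2 * r) ?_
    rw [mul_smul, hr]
    module
  have hindq : LinearIndependent ℝ ![q - p, (1 / 2 : ℝ) • (z - q)] := by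
    refine (LinearIndependent.pair_iff' hu).2 fun r hr => hline (2 * r + 1) ?_
    rw [add_smul, mul_smul, hr]
    module
  have hmem : ∀ b ∈ segment ℝ p q, ∀ r ∈ Icc (0 : ℝ) 1, ∀ t ∈ Ioo (0 : ℝ) 1,
      (1 / 2 : ℝ) • (p + r • (q - p)) + (1 / 2 : ℝ) • (b + t • (z - b)) ∈ D := by
    intro b hb r hr t ht
    have hzi : z ∈ interior D := by rwa [hDo.interior_eq]
    have h1 : b + t • (z - b) ∈ interior D := by
      have := hDc.combo_closure_interior_mem_interior (hcl hb) hzi (a := 1 - t) (b := t)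
        (by linarith [ht.2]) ht.1 (by ring)
      convert this using 1
      module
    have h2 : p + r • (q - p) ∈ closure D := by
      refine hcl ?_
      rw [segment_eq_image']
      exact ⟨r, hr, rfl⟩
    exact interior_subset (hDc.combo_closure_interior_mem_interior h2 h1 (by norm_num)
      (by norm_num) (by norm_num))
  obtain ⟨K₁, hK₁, H₁⟩ := exists_lintegral_enorm_sub_le μ hE hindp hDo.measurableSet
    (measurableSet_Icc (a := (0 : ℝ)) (b := 1 / 2)) (a := p) fun s hs t ht => by
      convert hmem p (left_mem_segment ℝ p q) (2 * s)
        ⟨by linarith [hs.1], by linarith [hs.2]⟩ t ht using 1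
      module
  obtain ⟨K₂, hK₂, H₂⟩ := exists_lintegral_enorm_sub_le μ hE hindq hDo.measurableSet
    (measurableSet_Icc (a := (1 / 2 : ℝ)) (b := 1)) (a := p) fun s hs t ht => by
      convert hmem q (right_mem_segment ℝ p q) (2 * s - 1)
        ⟨by linarith [hs.1], by linarith [hs.2]⟩ t ht using 1
      module
  refine ⟨nndist p q * (K₁ + K₂), ENNReal.mul_ne_top (by simp) (by simp [hK₁, hK₂]),
    fun w hw c => ?_⟩
  have hwc := hw.continuous
  refine (setLIntegral_segment_le
    (by fun_prop : Continuous fun x => ‖w x - c‖ₑ).measurable).trans ?_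
  rw [mul_assoc, add_mul]
  gcongr
  · exact H₁ w hw c
  · exact H₂ w hw c

theorem exists_lintegral_enorm_sub_weighted_mean_le {E : Type*} [NormedAddCommGroup E]
    [NormedSpace ℝ E] [FiniteDimensional ℝ E] [MeasurableSpace E] [BorelSpace E] (μ : Measure E)
    [μ.IsAddHaarMeasure] (hE : finrank ℝ E = 2) {D : Set E} (hDo : IsOpen D)
    (hDb : Bornology.IsBounded D) (hDc : Convex ℝ D)
    {p q : E} (hpq : p ≠ q) (h : segment ℝ p q ⊆ frontier D) {ψ : E → ℝ} (hψ : Continuous ψ)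
    (hψ0 : ∫ x in segment ℝ p q, ψ x ∂(μH[1]) ≠ 0) :
    ∃ K : ℝ≥0∞, K ≠ ∞ ∧ ∀ w : E → ℝ, ContDiff ℝ 1 w →
      ∫⁻ x in D, ‖w x - (∫ y in segment ℝ p q, w y * ψ y ∂(μH[1]))
          / ∫ y in segment ℝ p q, ψ y ∂(μH[1])‖ₑ ∂μ
        ≤ K * ∫⁻ x in D, ‖fderiv ℝ w x‖ₑ ∂μ := by
  obtain ⟨K₁, hK₁, H₁⟩ := lintegral_lintegral_enorm_sub_le μ hDo.measurableSet hDc hDb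
  obtain ⟨K₂, hK₂, H₂⟩ := exists_setLIntegral_segment_enorm_sub_le μ hE hDo hDc hpq h
  obtain ⟨K₃, hK₃, H₃⟩ := exists_enorm_sub_weighted_mean_le hψ hψ0
  have hDne : D.Nonempty :=
    closure_nonempty_iff.1 ⟨p, frontier_subset_closure (h (left_mem_segment ℝ p q))⟩
  have hμ0 : μ D ≠ 0 := (hDo.measure_pos μ hDne).ne'
  have hμt : μ D ≠ ∞ := hDb.measure_lt_top.ne
  refine ⟨(μ D)⁻¹ * K₁ + K₃ * (K₂ * (1 + (μ D)⁻¹ * K₁)) * μ D, ?_, fun w hw => ?_⟩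
  · finiteness
  have hwc := hw.continuous
  set G := ∫⁻ x in D, ‖fderiv ℝ w x‖ₑ ∂μ
  set e := (∫ y in segment ℝ p q, w y * ψ y ∂(μH[1])) / ∫ y in segment ℝ p q, ψ y ∂(μH[1])
  have hm : Measurable fun z : E × E => ‖w z.2 - w z.1‖ₑ :=
    (by fun_prop : Continuous fun z : E × E => ‖w z.2 - w z.1‖ₑ).measurable
  obtain ⟨y, -, hy⟩ := exists_le_setLAverage (μ := μ) (s := D)
    (f := fun x => ∫⁻ y in D, ‖w y - w x‖ₑ ∂μ) hμ0 hμt hm.lintegral_prod_right'.aemeasurable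
  have hy' : ∫⁻ x in D, ‖w x - w y‖ₑ ∂μ ≤ (μ D)⁻¹ * K₁ * G := by
    refine hy.trans ?_
    rw [setLAverage_eq, ENNReal.div_eq_inv_mul, mul_assoc]
    gcongr
    exact H₁ w hw
  calc ∫⁻ x in D, ‖w x - e‖ₑ ∂μ
      ≤ ∫⁻ x in D, (‖w x - w y‖ₑ + ‖w y - e‖ₑ) ∂μ := by
        refine lintegral_mono fun x => ?_
        simp only [← edist_eq_enorm_sub]
        exact edist_triangle _ _ _
    _ = ∫⁻ x in D, ‖w x - w y‖ₑ ∂μ + ‖w y - e‖ₑ * μ D := by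
        rw [lintegral_add_right _ measurable_const, setLIntegral_const]
    _ ≤ (μ D)⁻¹ * K₁ * G + K₃ * (K₂ * (G + (μ D)⁻¹ * K₁ * G)) * μ D := by
        gcongr
        refine (H₃ w hwc (w y)).trans ?_
        gcongr
        refine (H₂ w hw (w y)).trans ?_
        gcongr
    _ = _ := by ring

/-- Boundary-weighted `L¹` Poincaré-type inequality (Lemma 5.2, estimate (approx1)):
if `Γ` is a nondegenerate closed segment contained in the boundary of the bounded
convex open set `D ⊆ ℝ²` and `ψ` is a continuous weight with `ψ ≥ 0` on `Γ` and
`∫_Γ ψ dH¹ > 0`, then there is `C > 0` such that for every `C¹` function `w`,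
`∫_D |w - e_Γ(w)| ≤ C·∫_D |∇w|`, where `e_Γ(w) = (∫_Γ w·ψ dH¹)/(∫_Γ ψ dH¹)`. -/
theorem boundary_weighted_poincare_L1
    (D : Set (EuclideanSpace ℝ (Fin 2)))
    (hDo : IsOpen D) (hDb : Bornology.IsBounded D) (hDc : Convex ℝ D)
    (Γ : Set (EuclideanSpace ℝ (Fin 2)))
    (hseg : ∃ p q : EuclideanSpace ℝ (Fin 2), p ≠ q ∧ Γ = segment ℝ p q)
    (hΓD : Γ ⊆ frontier D)
    (ψ : EuclideanSpace ℝ (Fin 2) → ℝ) (hψc : Continuous ψ)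
    (hψ0 : ∀ x ∈ Γ, 0 ≤ ψ x)
    (hψpos : 0 < ∫ x in Γ, ψ x ∂(μH[1])) :
    ∃ C > 0, ∀ w : EuclideanSpace ℝ (Fin 2) → ℝ, ContDiff ℝ 1 w →
      (∫ x in D,
          |w x - (∫ y in Γ, w y * ψ y ∂(μH[1])) / ∫ y in Γ, ψ y ∂(μH[1])|) ≤
        C * ∫ x in D, ‖fderiv ℝ w x‖ := by
  obtain ⟨p, q, hpq, rfl⟩ := hseg
  obtain ⟨K, hK, H⟩ := exists_lintegral_enorm_sub_weighted_mean_le volume (by simp) hDo hDb hDc hpq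
    hΓD hψc hψpos.ne'
  refine ⟨K.toReal + 1, by positivity, fun w hw => ?_⟩
  have hwc := hw.continuous
  have hFc := hw.continuous_fderiv one_ne_zero
  have hG : ∫⁻ x in D, ‖fderiv ℝ w x‖ₑ ≠ ∞ :=
    ((hFc.continuousOn.integrableOn_compact hDb.isCompact_closure).mono_set
      subset_closure).hasFiniteIntegral.ne
  simp_rw [← Real.norm_eq_abs]
  rw [integral_norm_eq_lintegral_enorm (by fun_prop),
    integral_norm_eq_lintegral_enorm hFc.aestronglyMeasurable]
  calc _ ≤ (K * ∫⁻ x in D, ‖fderiv ℝ w x‖ₑ).toReal :=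
        ENNReal.toReal_mono (ENNReal.mul_ne_top hK hG) (H w hw)
    _ = K.toReal * (∫⁻ x in D, ‖fderiv ℝ w x‖ₑ).toReal := ENNReal.toReal_mul
    _ ≤ _ := by gcongr; linarith
end

section
/- For every κ ≥ 1 and every p ∈ [1, ∞) there exists a constant C > 0, depending only on κ and p, such that for every nondegenerate triangle T ⊆ ℝ² whose diameter h_T and inradius ρ_T satisfy h_T ≤ κ·ρ_T, every edge e of T of length h_e, and every continuously differentiable function ψ : ℝ² → ℝ, one has ∫_e |ψ|^p dH¹ ≤ C·h_e^{−1}·( h_e^p·∫_T |∇ψ|^p dx + ∫_T |ψ|^p dx ), where H¹ is the one-dimensional Hausdorff measure on e. -/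
open MeasureTheory

/-- The inradius of a subset of the plane: the radius of its largest inscribed ball. -/
noncomputable def inradius (T : Set (EuclideanSpace ℝ (Fin 2))) : ℝ :=
  sSup {r : ℝ | ∃ c : EuclideanSpace ℝ (Fin 2), Metric.closedBall c r ⊆ T}

/-- The signed area of the parallelogram spanned by two vectors of the plane. -/
def planeCross (u w : EuclideanSpace ℝ (Fin 2)) : ℝ := u 0 * w 1 - u 1 * w 0

lemma abs_planeCross_le (u w : EuclideanSpace ℝ (Fin 2)) : |planeCross u w| ≤ ‖u‖ * ‖w‖ := by
  apply abs_le_of_sq_le_sq _ (by positivity)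
  rw [mul_pow, EuclideanSpace.norm_sq_eq, EuclideanSpace.norm_sq_eq]
  simp only [planeCross, Fin.sum_univ_two, Real.norm_eq_abs, sq_abs]
  nlinarith [sq_nonneg (u 0 * w 0 + u 1 * w 1)]

lemma two_mul_radius_mul_dist_le {a b c z : EuclideanSpace ℝ (Fin 2)} {r : ℝ}
    (h : Metric.closedBall z r ⊆ convexHull ℝ {a, b, c}) :
    2 * r * dist a b ≤ |planeCross (b - a) (c - a)| := by
  rcases lt_or_ge r 0 with hr | hr
  · nlinarith [abs_nonneg (planeCross (b - a) (c - a)), dist_nonneg (x := a) (y := b)]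
  rcases eq_or_ne a b with rfl | hab
  · simp
  have hd : 0 < dist a b := dist_pos.2 hab
  set u := b - a with hu
  have hnu : dist a b = ‖u‖ := by rw [dist_comm, dist_eq_norm]
  rw [hnu] at hd ⊢
  have hsq : u 0 ^ 2 + u 1 ^ 2 = ‖u‖ ^ 2 := by
    rw [EuclideanSpace.norm_sq_eq]; simp [Fin.sum_univ_two]
  have hsub : convexHull ℝ {a, b, c} ⊆
      {x | planeCross u (x - a) ∈ Set.uIcc 0 (planeCross u (c - a))} := by
    refine convexHull_min ?_ ?_
    · rintro x (rfl | rfl | rfl)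
      · simp [planeCross]
      · have : planeCross u u = 0 := by simp only [planeCross]; ring
        simp [← hu, this]
      · simp
    · intro x hx y hy s t hs ht hst
      have hcomb : planeCross u (s • x + t • y - a) =
          s • planeCross u (x - a) + t • planeCross u (y - a) := by
        obtain rfl : s = 1 - t := by linarith
        simp [planeCross]; ring
      simp only [Set.mem_ofPred_eq, hcomb]
      exact (convex_uIcc 0 (planeCross u (c - a))) hx hy hs ht hst
  set n : EuclideanSpace ℝ (Fin 2) := (r / ‖u‖) • !₂[-u 1, u 0] with hn
  have hnn : ‖n‖ = r := by
    have : ‖(!₂[-u 1, u 0] : EuclideanSpace ℝ (Fin 2))‖ = ‖u‖ := by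
      simp [EuclideanSpace.norm_eq, Fin.sum_univ_two, add_comm]
    rw [hn, norm_smul, this, Real.norm_of_nonneg (by positivity)]
    field_simp
  have h1 := hsub (h (show z + n ∈ Metric.closedBall z r by simp [hnn]))
  have h2 := hsub (h (show z - n ∈ Metric.closedBall z r by simp [hnn]))
  have h3 := Set.abs_sub_le_of_uIcc_subset_uIcc (Set.uIcc_subset_uIcc h2 h1)
  have h4 : planeCross u (z + n - a) - planeCross u (z - n - a) = 2 * r * ‖u‖ := by
    have : planeCross u (z + n - a) - planeCross u (z - n - a) =
        2 * (r / ‖u‖) * (u 0 ^ 2 + u 1 ^ 2) := by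
      simp [planeCross, hn]; ring
    rw [this, hsq]; field_simp
  rw [h4, sub_zero] at h3
  exact (le_abs_self _).trans h3

lemma two_mul_inradius_mul_dist_le (a b c : EuclideanSpace ℝ (Fin 2)) :
    2 * inradius (convexHull ℝ {a, b, c}) * dist a b ≤ |planeCross (b - a) (c - a)| := by
  rcases eq_or_ne a b with rfl | hab
  · simp
  have hd : 0 < dist a b := dist_pos.2 hab
  have : inradius (convexHull ℝ {a, b, c}) ≤
      |planeCross (b - a) (c - a)| / (2 * dist a b) := by
    refine Real.sSup_le ?_ (by positivity)
    rintro r ⟨z, hz⟩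
    rw [le_div_iff₀ (by positivity)]
    linarith [two_mul_radius_mul_dist_le hz]
  rw [le_div_iff₀ (by positivity)] at this
  linarith

lemma setIntegral_segment_hausdorffMeasure {E F : Type*} [NormedAddCommGroup E]
    [NormedSpace ℝ E] [MeasurableSpace E] [BorelSpace E] [NormedAddCommGroup F]
    [NormedSpace ℝ F] {a b : E} (hab : a ≠ b) (f : E → F) :
    ∫ x in segment ℝ a b, f x ∂(μH[1]) =
      dist a b • ∫ t in (0 : ℝ)..1, f (a + t • (b - a)) := by
  have hd : 0 < dist a b := dist_pos.2 hab
  set d := dist a b with hdd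
  have hnu : ‖b - a‖ = d := by rw [hdd, dist_comm, dist_eq_norm]
  set γ : ℝ → E := fun t => a + (t / d) • (b - a) with hγ
  have hiso : Isometry γ := by
    refine Isometry.of_dist_eq fun s t => ?_
    rw [hγ]
    simp only [dist_add_left]
    rw [dist_eq_norm, ← sub_smul, norm_smul, hnu, Real.dist_eq, ← sub_div, norm_div,
      Real.norm_of_nonneg hd.le, Real.norm_eq_abs]
    field_simp
  have hemb : MeasurableEmbedding γ := hiso.isClosedEmbedding.measurableEmbedding
  have himg : segment ℝ a b = γ '' Set.Icc 0 d := by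
    rw [segment_eq_image', Set.ext_iff]
    intro x
    constructor
    · rintro ⟨t, ht, rfl⟩
      refine ⟨t * d, ⟨by nlinarith [ht.1], by nlinarith [ht.2]⟩, ?_⟩
      simp only [hγ]
      rw [mul_div_cancel_right₀ _ hd.ne']
    · rintro ⟨t, ht, rfl⟩
      exact ⟨t / d, ⟨div_nonneg ht.1 hd.le, (div_le_one hd).2 ht.2⟩, rfl⟩
  have hrestr : (μH[1] : Measure E).restrict (segment ℝ a b) =
      (Measure.map γ volume).restrict (segment ℝ a b) := by
    rw [← hausdorffMeasure_real, hiso.map_hausdorffMeasure (Or.inl zero_le_one),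
      Measure.restrict_restrict_of_subset]
    rw [himg]
    exact Set.image_subset_range _ _
  rw [hrestr, hemb.setIntegral_map, himg, Set.preimage_image_eq _ hemb.injective,
    integral_Icc_eq_integral_Ioc, ← intervalIntegral.integral_of_le hd.le]
  have := intervalIntegral.integral_comp_div (a := 0) (b := d)
    (fun t => f (a + t • (b - a))) hd.ne'
  simpa [hγ, hd.ne'] using this

lemma abs_planeCross_mul_integral_le_setIntegral {f : EuclideanSpace ℝ (Fin 2) → ℝ}
    (hf : Continuous f) (hf0 : 0 ≤ f) {K : Set (EuclideanSpace ℝ (Fin 2))}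
    (hK : IsCompact K) {a u w : EuclideanSpace ℝ (Fin 2)}
    (hsub : ∀ t ∈ Set.Icc (0 : ℝ) 1, ∀ s ∈ Set.Icc (0 : ℝ) 1, a + t • u + s • w ∈ K) :
    |planeCross u w| * ∫ t in (0 : ℝ)..1, ∫ s in (0 : ℝ)..1, f (a + t • u + s • w) ≤
      ∫ x in K, f x := by
  rcases eq_or_ne (planeCross u w) 0 with h0 | h0
  · rw [h0, abs_zero, zero_mul]
    exact integral_nonneg hf0
  set M : Matrix (Fin 2) (Fin 2) ℝ := !![u 0, w 0; u 1, w 1] with hM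
  have hdet : M.det = planeCross u w := by
    rw [hM, Matrix.det_fin_two_of, planeCross]; ring
  set L : (Fin 2 → ℝ) →L[ℝ] (Fin 2 → ℝ) := (Matrix.toLin' M).toContinuousLinearMap with hL
  set Ψ : (Fin 2 → ℝ) → (Fin 2 → ℝ) := fun y => a.ofLp + L y with hΨ
  have hLdet : L.det = planeCross u w := by
    rw [← hdet, ← LinearMap.det_toLin']; rfl
  have hΨ' (y : Fin 2 → ℝ) : WithLp.toLp 2 (Ψ y) = a + y 0 • u + y 1 • w := by
    ext i
    fin_cases i <;> simp [hΨ, hL, hM, Matrix.vecHead, Matrix.vecTail] <;> ring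
  have hinj : Function.Injective Ψ := by
    refine (add_right_injective _).comp ?_
    refine (Matrix.mulVec_injective_iff_isUnit (A := M)).2 ?_
    rw [Matrix.isUnit_iff_isUnit_det, hdet]
    exact h0.isUnit
  set Q : Set (Fin 2 → ℝ) := Set.Icc 0 1 with hQ
  have hderiv : ∀ y ∈ Q, HasFDerivWithinAt Ψ L Q y := fun y _ =>
    (L.hasFDerivAt.const_add _).hasFDerivWithinAt
  have hemb := (MeasurableEquiv.toLp 2 (Fin 2 → ℝ)).measurableEmbedding
  have hmp := PiLp.volume_preserving_toLp (Fin 2)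
  have hsq : ∫ y in Q, f (WithLp.toLp 2 (Ψ y)) =
      ∫ t in (0 : ℝ)..1, ∫ s in (0 : ℝ)..1, f (a + t • u + s • w) := by
    have hpre : Q = (MeasurableEquiv.finTwoArrow (α := ℝ)) ⁻¹'
        (Set.Icc 0 1 ×ˢ Set.Icc 0 1) := by
      ext y
      simp [hQ, Pi.le_def, Fin.forall_fin_two, MeasurableEquiv.finTwoArrow]
    have := (volume_preserving_finTwoArrow ℝ).setIntegral_preimage_emb
      (MeasurableEquiv.finTwoArrow (α := ℝ)).measurableEmbedding
      (fun z : ℝ × ℝ => f (a + z.1 • u + z.2 • w)) (Set.Icc 0 1 ×ˢ Set.Icc 0 1)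
    rw [← hpre] at this
    simp only [hΨ']
    refine Eq.trans this ?_
    rw [Measure.volume_eq_prod, setIntegral_prod]
    · simp only [intervalIntegral.integral_of_le zero_le_one, integral_Icc_eq_integral_Ioc]
    · refine ContinuousOn.integrableOn_compact (isCompact_Icc.prod isCompact_Icc) ?_
      fun_prop
  have himg : (∫ x in WithLp.toLp 2 '' (Ψ '' Q), f x) =
      |planeCross u w| * ∫ y in Q, f (WithLp.toLp 2 (Ψ y)) := by
    rw [hmp.setIntegral_image_emb hemb, integral_image_eq_integral_abs_det_fderiv_smul volume
      measurableSet_Icc hderiv hinj.injOn]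
    simp only [hLdet, smul_eq_mul, integral_const_mul, hQ]
  rw [← hsq, ← himg]
  refine setIntegral_mono_set (hf.continuousOn.integrableOn_compact hK)
    (Filter.Eventually.of_forall hf0) (LE.le.eventuallyLE ?_)
  rintro _ ⟨_, ⟨y, hy, rfl⟩, rfl⟩
  rw [hΨ']
  exact hsub _ ⟨hy.1 0, hy.2 0⟩ _ ⟨hy.1 1, hy.2 1⟩

lemma intervalIntegral_rpow_le {g : ℝ → ℝ} (hg : Continuous g) (hg0 : 0 ≤ g) {p : ℝ}
    (hp : 1 ≤ p) : (∫ t in (0 : ℝ)..1, g t) ^ p ≤ ∫ t in (0 : ℝ)..1, g t ^ p := by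
  have hgp : Continuous fun t => g t ^ p :=
    hg.rpow_const fun _ => Or.inr (zero_le_one.trans hp)
  simp only [intervalIntegral.integral_of_le zero_le_one]
  have : IsProbabilityMeasure (volume.restrict (Set.Ioc (0 : ℝ) 1)) :=
    ⟨by simp⟩
  refine (convexOn_rpow hp).map_integral_le (μ := volume.restrict (Set.Ioc (0 : ℝ) 1))
    ((Real.continuous_rpow_const (zero_le_one.trans hp)).continuousOn) isClosed_Ici
    (Filter.Eventually.of_forall hg0) hg.integrableOn_Ioc hgp.integrableOn_Ioc

lemma abs_le_abs_add_integral_norm_fderiv {E : Type*} [NormedAddCommGroup E] [NormedSpace ℝ E]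
    {ψ : E → ℝ} (hψ : ContDiff ℝ 1 ψ) (x w : E) {s : ℝ} (hs : s ∈ Set.Icc (0 : ℝ) 1) :
    |ψ x| ≤ |ψ (x + s • w)| + ‖w‖ * ∫ r in (0 : ℝ)..1, ‖fderiv ℝ ψ (x + r • w)‖ := by
  have hc : Continuous (fderiv ℝ ψ) := hψ.continuous_fderiv one_ne_zero
  have hline : ∀ r : ℝ, HasDerivAt (fun r : ℝ => ψ (x + r • w)) (fderiv ℝ ψ (x + r • w) w) r := by
    intro r
    have h1 : HasDerivAt (fun r : ℝ => x + r • w) w r := by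
      simpa using ((hasDerivAt_id r).smul_const w).const_add x
    exact (hψ.differentiable one_ne_zero _).hasFDerivAt.comp_hasDerivAt r h1
  have hci : Continuous fun r : ℝ => fderiv ℝ ψ (x + r • w) w := by fun_prop
  have hci' : Continuous fun r : ℝ => ‖fderiv ℝ ψ (x + r • w)‖ * ‖w‖ := by fun_prop
  have hftc := intervalIntegral.integral_eq_sub_of_hasDerivAt (a := 0) (b := s)
    (fun r _ => hline r) (hci.intervalIntegrable _ _)
  have hb : |∫ r in (0 : ℝ)..s, fderiv ℝ ψ (x + r • w) w| ≤
      ∫ r in (0 : ℝ)..1, ‖fderiv ℝ ψ (x + r • w)‖ * ‖w‖ := by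
    calc _ ≤ ∫ r in (0 : ℝ)..s, ‖fderiv ℝ ψ (x + r • w)‖ * ‖w‖ :=
          intervalIntegral.norm_integral_le_of_norm_le hs.1
            (Filter.Eventually.of_forall fun r _ => (fderiv ℝ ψ (x + r • w)).le_opNorm w)
            (hci'.intervalIntegrable _ _)
      _ ≤ _ := intervalIntegral.integral_mono_interval le_rfl hs.1 hs.2
          (Filter.Eventually.of_forall fun r => by positivity) (hci'.intervalIntegrable _ _)
  rw [hftc, intervalIntegral.integral_mul_const, zero_smul, add_zero] at hb
  have := abs_sub_abs_le_abs_sub (ψ x) (ψ (x + s • w))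
  rw [abs_sub_comm] at this
  linarith

lemma abs_rpow_le_of_contDiff {E : Type*} [NormedAddCommGroup E] [NormedSpace ℝ E]
    {ψ : E → ℝ} (hψ : ContDiff ℝ 1 ψ) {p : ℝ} (hp : 1 ≤ p) (x w : E) :
    |ψ x| ^ p ≤ 2 ^ (p - 1) * ((∫ s in (0 : ℝ)..1, |ψ (x + s • w)| ^ p) +
      ‖w‖ ^ p * ∫ s in (0 : ℝ)..1, ‖fderiv ℝ ψ (x + s • w)‖ ^ p) := by
  have hp0 : 0 ≤ p := zero_le_one.trans hp
  have hc : Continuous (fderiv ℝ ψ) := hψ.continuous_fderiv one_ne_zero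
  have hψc : Continuous ψ := hψ.continuous
  have hc1 : Continuous fun s : ℝ => |ψ (x + s • w)| ^ p :=
    Continuous.rpow_const (by fun_prop) fun _ => Or.inr hp0
  set G := ∫ s in (0 : ℝ)..1, ‖fderiv ℝ ψ (x + s • w)‖ ^ p with hG
  have hpt : ∀ s ∈ Set.Icc (0 : ℝ) 1,
      |ψ x| ^ p ≤ 2 ^ (p - 1) * (|ψ (x + s • w)| ^ p + ‖w‖ ^ p * G) := by
    intro s hs
    have hI : 0 ≤ ∫ r in (0 : ℝ)..1, ‖fderiv ℝ ψ (x + r • w)‖ :=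
      intervalIntegral.integral_nonneg zero_le_one fun _ _ => norm_nonneg _
    have hJ := intervalIntegral_rpow_le (g := fun r => ‖fderiv ℝ ψ (x + r • w)‖)
      (by fun_prop) (fun _ => norm_nonneg _) hp
    calc |ψ x| ^ p
        ≤ (|ψ (x + s • w)| + ‖w‖ * ∫ r in (0 : ℝ)..1, ‖fderiv ℝ ψ (x + r • w)‖) ^ p :=
          Real.rpow_le_rpow (abs_nonneg _) (abs_le_abs_add_integral_norm_fderiv hψ x w hs) hp0
      _ ≤ 2 ^ (p - 1) * (|ψ (x + s • w)| ^ p +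
            (‖w‖ * ∫ r in (0 : ℝ)..1, ‖fderiv ℝ ψ (x + r • w)‖) ^ p) := by
          exact_mod_cast NNReal.rpow_add_le_mul_rpow_add_rpow ⟨_, abs_nonneg (ψ (x + s • w))⟩
            ⟨_, mul_nonneg (norm_nonneg w) hI⟩ hp
      _ ≤ _ := by
          rw [Real.mul_rpow (norm_nonneg _) hI]
          gcongr
  have hmono := intervalIntegral.integral_mono_on zero_le_one
    (continuous_const.intervalIntegrable (μ := volume) 0 1)
    ((continuous_const.mul (hc1.add continuous_const)).intervalIntegrable 0 1) hpt
  simp only [Pi.mul_apply, Pi.add_apply] at hmono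
  rw [intervalIntegral.integral_const_mul, intervalIntegral.integral_add
    (hc1.intervalIntegrable _ _) (continuous_const.intervalIntegrable _ _)] at hmono
  simpa using hmono

lemma abs_planeCross_mul_integral_abs_rpow_le {ψ : EuclideanSpace ℝ (Fin 2) → ℝ}
    (hψ : ContDiff ℝ 1 ψ) {p : ℝ} (hp : 1 ≤ p) {K : Set (EuclideanSpace ℝ (Fin 2))}
    (hK : IsCompact K) {a u w : EuclideanSpace ℝ (Fin 2)}
    (hsub : ∀ t ∈ Set.Icc (0 : ℝ) 1, ∀ s ∈ Set.Icc (0 : ℝ) 1, a + t • u + s • w ∈ K) :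
    |planeCross u w| * ∫ t in (0 : ℝ)..1, |ψ (a + t • u)| ^ p ≤
      2 ^ (p - 1) * ((∫ x in K, |ψ x| ^ p) + ‖w‖ ^ p * ∫ x in K, ‖fderiv ℝ ψ x‖ ^ p) := by
  have hp0 : 0 ≤ p := zero_le_one.trans hp
  have hc : Continuous (fderiv ℝ ψ) := hψ.continuous_fderiv one_ne_zero
  have hψc : Continuous ψ := hψ.continuous
  have hF : Continuous fun x => |ψ x| ^ p :=
    Continuous.rpow_const (by fun_prop) fun _ => Or.inr hp0
  have hG : Continuous fun x => ‖fderiv ℝ ψ x‖ ^ p :=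
    Continuous.rpow_const (by fun_prop) fun _ => Or.inr hp0
  have hinner {f : EuclideanSpace ℝ (Fin 2) → ℝ} (hf : Continuous f) :
      Continuous fun t : ℝ => ∫ s in (0 : ℝ)..1, f (a + t • u + s • w) :=
    intervalIntegral.continuous_parametric_intervalIntegral_of_continuous'
      (by unfold Function.uncurry; fun_prop) 0 1
  have hmono := intervalIntegral.integral_mono_on (μ := volume) zero_le_one
    ((hF.comp (by fun_prop : Continuous fun t : ℝ => a + t • u)).intervalIntegrable 0 1)
    ((continuous_const.mul ((hinner hF).add (continuous_const.mul
      (hinner hG)))).intervalIntegrable 0 1)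
    (fun t _ => abs_rpow_le_of_contDiff hψ hp (a + t • u) w)
  simp only [Pi.mul_apply, Pi.add_apply, Function.comp_apply] at hmono
  rw [intervalIntegral.integral_const_mul, intervalIntegral.integral_add
    ((hinner hF).intervalIntegrable _ _)
    (((hinner hG).intervalIntegrable _ _).const_mul _),
    intervalIntegral.integral_const_mul] at hmono
  have h1 := abs_planeCross_mul_integral_le_setIntegral hF
    (fun x => Real.rpow_nonneg (abs_nonneg _) p) hK hsub
  have h2 := abs_planeCross_mul_integral_le_setIntegral hG
    (fun x => Real.rpow_nonneg (norm_nonneg _) p) hK hsub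
  calc _ ≤ _ := mul_le_mul_of_nonneg_left hmono (abs_nonneg (planeCross u w))
    _ = 2 ^ (p - 1) *
        (|planeCross u w| * (∫ t in (0 : ℝ)..1, ∫ s in (0 : ℝ)..1, |ψ (a + t • u + s • w)| ^ p) +
        ‖w‖ ^ p * (|planeCross u w| *
          ∫ t in (0 : ℝ)..1, ∫ s in (0 : ℝ)..1, ‖fderiv ℝ ψ (a + t • u + s • w)‖ ^ p)) := by ring
    _ ≤ _ := by gcongr

lemma abs_planeCross_mul_integral_half_edge_le {ψ : EuclideanSpace ℝ (Fin 2) → ℝ}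
    (hψ : ContDiff ℝ 1 ψ) {p : ℝ} (hp : 1 ≤ p) (a b c : EuclideanSpace ℝ (Fin 2)) :
    |planeCross (b - a) (c - a)| *
        ∫ t in (0 : ℝ)..1, |ψ (a + t • ((1 / 2 : ℝ) • (b - a)))| ^ p ≤
      2 ^ (p + 1) * ((∫ x in convexHull ℝ {a, b, c}, |ψ x| ^ p) +
        dist a c ^ p * ∫ x in convexHull ℝ {a, b, c}, ‖fderiv ℝ ψ x‖ ^ p) := by
  have hK : IsCompact (convexHull ℝ {a, b, c}) :=
    (Set.toFinite {a, b, c}).isCompact_convexHull ℝ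
  have hsub : ∀ t ∈ Set.Icc (0 : ℝ) 1, ∀ s ∈ Set.Icc (0 : ℝ) 1,
      a + t • ((1 / 2 : ℝ) • (b - a)) + s • ((1 / 2 : ℝ) • (c - a)) ∈
        convexHull ℝ {a, b, c} := by
    intro t ht s hs
    have ha : a ∈ convexHull ℝ {a, b, c} := subset_convexHull ℝ _ (by simp)
    have hb : b ∈ convexHull ℝ {a, b, c} := subset_convexHull ℝ _ (by simp)
    have hc : c ∈ convexHull ℝ {a, b, c} := subset_convexHull ℝ _ (by simp)
    have hconv := convex_convexHull ℝ ({a, b, c} : Set (EuclideanSpace ℝ (Fin 2)))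
    have h1 := hconv ha hb (sub_nonneg.2 ht.2) ht.1 (by ring)
    have h2 := hconv ha hc (sub_nonneg.2 hs.2) hs.1 (by ring)
    have h3 := hconv h1 h2 (by norm_num : (0 : ℝ) ≤ 1 / 2) (by norm_num : (0 : ℝ) ≤ 1 / 2)
      (by norm_num)
    convert h3 using 1
    module
  have h := abs_planeCross_mul_integral_abs_rpow_le hψ hp hK hsub
  have hcross : |planeCross ((1 / 2 : ℝ) • (b - a)) ((1 / 2 : ℝ) • (c - a))| =
      |planeCross (b - a) (c - a)| / 4 := by
    rw [← Nat.abs_ofNat (R := ℝ) 4, ← abs_div]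
    congr 1
    simp [planeCross]
    ring
  have hnorm : ‖(1 / 2 : ℝ) • (c - a)‖ ≤ dist a c := by
    rw [norm_smul, dist_comm, dist_eq_norm, Real.norm_of_nonneg (by norm_num)]
    linarith [norm_nonneg (c - a)]
  have hB : 0 ≤ ∫ x in convexHull ℝ {a, b, c}, ‖fderiv ℝ ψ x‖ ^ p :=
    integral_nonneg fun x => Real.rpow_nonneg (norm_nonneg _) p
  have hpow : (2 : ℝ) ^ (p + 1) = 4 * 2 ^ (p - 1) := by
    rw [show p + 1 = p - 1 + 2 by ring, Real.rpow_add two_pos]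
    norm_num [mul_comm]
  rw [hcross] at h
  rw [hpow]
  calc _ = 4 * (|planeCross (b - a) (c - a)| / 4 *
        ∫ t in (0 : ℝ)..1, |ψ (a + t • ((1 / 2 : ℝ) • (b - a)))| ^ p) := by ring
    _ ≤ 4 * _ := mul_le_mul_of_nonneg_left h (by norm_num)
    _ ≤ 4 * (2 ^ (p - 1) * ((∫ x in convexHull ℝ {a, b, c}, |ψ x| ^ p) +
        dist a c ^ p * ∫ x in convexHull ℝ {a, b, c}, ‖fderiv ℝ ψ x‖ ^ p)) := by
      gcongr
    _ = _ := by ring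

lemma integral_edge_eq_add_half_edges {E : Type*} [NormedAddCommGroup E] [NormedSpace ℝ E]
    {f : E → ℝ} (hf : Continuous f) (a b : E) :
    ∫ t in (0 : ℝ)..1, f (a + t • (b - a)) =
      ((∫ t in (0 : ℝ)..1, f (a + t • ((1 / 2 : ℝ) • (b - a)))) +
        ∫ t in (0 : ℝ)..1, f (b + t • ((1 / 2 : ℝ) • (a - b)))) / 2 := by
  set g : ℝ → ℝ := fun t => f (a + t • (b - a)) with hg
  have hgc : Continuous g := by fun_prop
  have h1 : ∫ t in (0 : ℝ)..1, f (a + t • ((1 / 2 : ℝ) • (b - a))) =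
      2 * ∫ t in (0 : ℝ)..1 / 2, g t := by
    have := intervalIntegral.integral_comp_mul_left (a := 0) (b := 1) g
      (show (1 / 2 : ℝ) ≠ 0 by norm_num)
    rw [mul_zero, mul_one, smul_eq_mul, one_div, inv_inv, ← one_div] at this
    rw [← this]
    refine intervalIntegral.integral_congr fun t _ => ?_
    simp only [hg]
    congr 1
    module
  have h2 : ∫ t in (0 : ℝ)..1, f (b + t • ((1 / 2 : ℝ) • (a - b))) =
      2 * ∫ t in (1 / 2 : ℝ)..1, g t := by
    have := intervalIntegral.integral_comp_sub_mul (a := 0) (b := 1) g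
      (show (1 / 2 : ℝ) ≠ 0 by norm_num) 1
    rw [mul_zero, mul_one, smul_eq_mul, sub_zero, sub_half, one_div, inv_inv, ← one_div] at this
    rw [← this]
    refine intervalIntegral.integral_congr fun t _ => ?_
    simp only [hg]
    congr 1
    module
  rw [h1, h2, ← intervalIntegral.integral_add_adjacent_intervals
    (hgc.intervalIntegrable 0 (1 / 2)) (hgc.intervalIntegrable (1 / 2) 1)]
  ring

lemma setIntegral_edge_abs_rpow_le {κ p : ℝ} (hκ : 1 ≤ κ) (hp : 1 ≤ p)
    {a b c : EuclideanSpace ℝ (Fin 2)} (hab : a ≠ b) (hac : a ≠ c)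
    (hT : Metric.diam (convexHull ℝ {a, b, c}) ≤ κ * inradius (convexHull ℝ {a, b, c}))
    {ψ : EuclideanSpace ℝ (Fin 2) → ℝ} (hψ : ContDiff ℝ 1 ψ) :
    ∫ x in segment ℝ a b, |ψ x| ^ p ∂(μH[1]) ≤
      2 ^ p * κ ^ (p + 1) * (dist a b)⁻¹ *
        (dist a b ^ p * (∫ x in convexHull ℝ {a, b, c}, ‖fderiv ℝ ψ x‖ ^ p) +
          ∫ x in convexHull ℝ {a, b, c}, |ψ x| ^ p) := by
  have hp0 : 0 ≤ p := zero_le_one.trans hp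
  have hκ0 : 0 < κ := zero_lt_one.trans_le hκ
  have hh : 0 < dist a b := dist_pos.2 hab
  have hh' : 0 < dist a c := dist_pos.2 hac
  have hK : IsCompact (convexHull ℝ {a, b, c}) :=
    (Set.toFinite {a, b, c}).isCompact_convexHull ℝ
  have ha : a ∈ convexHull ℝ {a, b, c} := subset_convexHull ℝ _ (by simp)
  have hb : b ∈ convexHull ℝ {a, b, c} := subset_convexHull ℝ _ (by simp)
  have hc : c ∈ convexHull ℝ {a, b, c} := subset_convexHull ℝ _ (by simp)
  have hdab := (Metric.dist_le_diam_of_mem hK.isBounded ha hb).trans hT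
  have hdac := (Metric.dist_le_diam_of_mem hK.isBounded ha hc).trans hT
  have hdbc := (Metric.dist_le_diam_of_mem hK.isBounded hb hc).trans hT
  have hF : Continuous fun x => |ψ x| ^ p :=
    Continuous.rpow_const hψ.continuous.abs fun _ => Or.inr hp0
  have hr1 := two_mul_inradius_mul_dist_le a b c
  have hr2 : 2 * inradius (convexHull ℝ {a, b, c}) * dist a c ≤
      |planeCross (b - a) (c - a)| := by
    have := two_mul_inradius_mul_dist_le a c b
    rw [Set.pair_comm c b] at this
    refine this.trans_eq ?_
    rw [← abs_neg]
    congr 1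
    simp only [planeCross]
    ring
  have hup := abs_planeCross_le (b - a) (c - a)
  rw [← dist_eq_norm, ← dist_eq_norm, dist_comm b, dist_comm c] at hup
  have hfst := abs_planeCross_mul_integral_half_edge_le hψ hp a b c
  have hsnd := abs_planeCross_mul_integral_half_edge_le hψ hp b a c
  rw [Set.insert_comm b a {c}] at hsnd
  have hcross : |planeCross (a - b) (c - b)| = |planeCross (b - a) (c - a)| := by
    rw [← abs_neg]
    congr 1
    simp [planeCross]
    ring
  rw [hcross] at hsnd
  rw [setIntegral_segment_hausdorffMeasure hab, integral_edge_eq_add_half_edges hF, smul_eq_mul]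
  have hA : 0 ≤ ∫ x in convexHull ℝ {a, b, c}, |ψ x| ^ p :=
    integral_nonneg fun x => Real.rpow_nonneg (abs_nonneg _) p
  have hB : 0 ≤ ∫ x in convexHull ℝ {a, b, c}, ‖fderiv ℝ ψ x‖ ^ p :=
    integral_nonneg fun x => Real.rpow_nonneg (norm_nonneg _) p
  set A := ∫ x in convexHull ℝ {a, b, c}, |ψ x| ^ p
  set B := ∫ x in convexHull ℝ {a, b, c}, ‖fderiv ℝ ψ x‖ ^ p
  set ρ := inradius (convexHull ℝ {a, b, c})
  set D := |planeCross (b - a) (c - a)|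
  set h := dist a b
  set I₁ := ∫ t in (0 : ℝ)..1, |ψ (a + t • ((1 / 2 : ℝ) • (b - a)))| ^ p
  set I₂ := ∫ t in (0 : ℝ)..1, |ψ (b + t • ((1 / 2 : ℝ) • (a - b)))| ^ p
  have hρh : ρ ≤ h := by
    have : 2 * ρ ≤ h := le_of_mul_le_mul_right (hr2.trans hup) hh'
    linarith
  have hκρ : κ * ρ ≤ κ * h := by gcongr
  have hbound {x : ℝ} (hx : 0 ≤ x) (hxle : x ≤ κ * ρ) :
      2 ^ (p + 1) * (A + x ^ p * B) ≤ 2 ^ (p + 1) * κ ^ p * (h ^ p * B + A) := by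
    have hxp : x ^ p ≤ κ ^ p * h ^ p := by
      rw [← Real.mul_rpow hκ0.le hh.le]
      exact Real.rpow_le_rpow hx (hxle.trans hκρ) hp0
    have hκp : 1 ≤ κ ^ p := Real.one_le_rpow hκ hp0
    calc 2 ^ (p + 1) * (A + x ^ p * B)
        ≤ 2 ^ (p + 1) * (κ ^ p * A + κ ^ p * h ^ p * B) := by
          gcongr
          exact le_mul_of_one_le_left hA hκp
      _ = _ := by ring
  have hsum : D * ((I₁ + I₂) / 2) ≤ 2 ^ (p + 1) * κ ^ p * (h ^ p * B + A) := by
    linarith [hfst.trans (hbound hh'.le hdac), hsnd.trans (hbound dist_nonneg hdbc)]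
  have hhD : 2 * h ^ 2 ≤ κ * D := by
    nlinarith [mul_le_mul_of_nonneg_left hr1 hκ0.le, mul_le_mul_of_nonneg_right hdab hh.le]
  have hI : 0 ≤ (I₁ + I₂) / 2 := by
    have h1 : 0 ≤ I₁ := intervalIntegral.integral_nonneg zero_le_one fun _ _ => by positivity
    have h2 : 0 ≤ I₂ := intervalIntegral.integral_nonneg zero_le_one fun _ _ => by positivity
    positivity
  have hfinal : h ^ 2 * ((I₁ + I₂) / 2) ≤ 2 ^ p * κ ^ (p + 1) * (h ^ p * B + A) := by
    rw [Real.rpow_add_one two_ne_zero] at hsum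
    rw [Real.rpow_add_one hκ0.ne']
    nlinarith [mul_le_mul_of_nonneg_right hhD hI, mul_le_mul_of_nonneg_left hsum hκ0.le]
  calc h * ((I₁ + I₂) / 2) = h⁻¹ * (h ^ 2 * ((I₁ + I₂) / 2)) := by field_simp
    _ ≤ h⁻¹ * (2 ^ p * κ ^ (p + 1) * (h ^ p * B + A)) := by gcongr
    _ = _ := by ring

/-- Scaled trace inequality (Lemma 3.4): for `κ ≥ 1` and `p ∈ [1, ∞)` there is
`C > 0` such that for every shape-regular triangle `T` (`h_T ≤ κ·ρ_T`), every edge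
`e` of `T` of length `h_e`, and every `C¹` function `ψ`,
`∫_e |ψ|^p dH¹ ≤ C·h_e⁻¹·(h_e^p·∫_T |∇ψ|^p + ∫_T |ψ|^p)`. -/
theorem scaled_trace_inequality
    (κ : ℝ) (hκ : 1 ≤ κ) (p : ℝ) (hp : 1 ≤ p) :
    ∃ C > 0,
      ∀ v : Fin 3 → EuclideanSpace ℝ (Fin 2), AffineIndependent ℝ v →
        Metric.diam (convexHull ℝ (Set.range v)) ≤
          κ * inradius (convexHull ℝ (Set.range v)) →
        ∀ i j : Fin 3, i ≠ j →
          ∀ ψ : EuclideanSpace ℝ (Fin 2) → ℝ, ContDiff ℝ 1 ψ →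
            (∫ x in segment ℝ (v i) (v j), |ψ x| ^ p ∂(μH[1])) ≤
              C * (dist (v i) (v j))⁻¹ *
                (dist (v i) (v j) ^ p *
                    (∫ x in convexHull ℝ (Set.range v), ‖fderiv ℝ ψ x‖ ^ p) +
                  ∫ x in convexHull ℝ (Set.range v), |ψ x| ^ p) := by
  have hκ0 : 0 < κ := zero_lt_one.trans_le hκ
  refine ⟨2 ^ p * κ ^ (p + 1), by positivity, fun v hv hT i j hij ψ hψ => ?_⟩
  obtain ⟨k, hik, hrange⟩ : ∃ k, i ≠ k ∧ (Finset.univ : Finset (Fin 3)) = {i, j, k} := by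
    revert i j
    decide
  have hset : Set.range v = {v i, v j, v k} := by
    rw [← Set.image_univ, ← Finset.coe_univ, hrange]
    simp [Set.image_insert_eq]
  rw [hset] at hT ⊢
  exact setIntegral_edge_abs_rpow_le hκ hp (hv.injective.ne hij) (hv.injective.ne hik) hT hψ
end
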